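/- Let n ≥ 3 be an integer, let a ≠ 0 and C ∈ ℝ, and define u : ℝ → ℝ by u(s) = C − ((n−2)/(2a))·exp(−2·a·s/(n−2)). Then the function s ↦ (n−1)·(u(s)·u''(s) − u'(s)²) + a·u(s)·u'(s) is not constant on ℝ. -/

import Mathlib

/-!
For `u = C + v` with `v s = c e^{ks}`, the relation `v v'' = (v')²` reduces `u u'' - (u')²` to
`C v''`. Hence `b (u u'' - (u')²) + a u u'` is a quadratic polynomial in `e^{ks}` whose leading
coefficient `a c² k` comes from `a u u'` alone, and it takes each value only finitely often.
-/

open Real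

theorem finite_setOf_quadratic_eq {R : Type*} [CommRing R] [IsDomain R] {p : R} (hp : p ≠ 0)
    (q r : R) : {x : R | p * x ^ 2 + q * x = r}.Finite := by
  have hne : (.C p * .X ^ 2 + .C q * .X + .C (-r) : Polynomial R) ≠ 0 :=
    Polynomial.leadingCoeff_ne_zero.mp (by rwa [Polynomial.leadingCoeff_quadratic hp])
  simpa [Polynomial.IsRoot, ← sub_eq_add_neg, sub_eq_zero] using
    Polynomial.finite_setOfPred_isRoot hne

theorem exp_const_mul_injective {k : ℝ} (hk : k ≠ 0) :
    Function.Injective fun s : ℝ => exp (k * s) :=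
  exp_injective.comp (mul_right_injective₀ hk)

theorem deriv_const_mul_exp_const_mul (c k : ℝ) :
    deriv (fun s : ℝ => c * exp (k * s)) = fun s => c * k * exp (k * s) := by
  ext s
  rw [deriv_const_mul_field, deriv_comp_mul_left, Real.deriv_exp, smul_eq_mul, mul_assoc]

/-- The coefficient `λ₂` that the metric `u⁻² g₁` would need in order to be a gradient Ricci
soliton, where `g₁` is the product soliton with potential `f s = a s`. The weight `b` is `n - 1` in
dimension `n`. -/
noncomputable def solitonCoeff (a b : ℝ) (u : ℝ → ℝ) (s : ℝ) : ℝ :=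
  b * (u s * deriv (deriv u) s - deriv u s ^ 2) + a * u s * deriv u s

theorem solitonCoeff_const_add_mul_exp (a b C c k s : ℝ) :
    solitonCoeff a b (fun s => C + c * exp (k * s)) s =
      a * c ^ 2 * k * exp (k * s) ^ 2 + c * k * C * (a + b * k) * exp (k * s) := by
  rw [solitonCoeff, deriv_const_add', deriv_const_mul_exp_const_mul,
    deriv_const_mul_exp_const_mul]
  ring

theorem stmt_14_general {a c k : ℝ} (ha : a ≠ 0) (hc : c ≠ 0) (hk : k ≠ 0) (b C K : ℝ) :
    {s | solitonCoeff a b (fun s => C + c * exp (k * s)) s = K}.Finite := by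
  have hlead : a * c ^ 2 * k ≠ 0 := by positivity
  simp only [solitonCoeff_const_add_mul_exp]
  exact (finite_setOf_quadratic_eq hlead _ K).preimage (exp_const_mul_injective hk).injOn

/-- For `u(s) = C − ((n−2)/(2a))·e^{−2as/(n−2)}` with `a ≠ 0`, the would-be
soliton coefficient `(n−1)·(u·u'' − (u')²) + a·u·u'` is not constant on `ℝ`. -/
theorem stmt_14 (n : ℕ) (hn : 3 ≤ n) (a C : ℝ) (ha : a ≠ 0)
    (u : ℝ → ℝ)
    (hu : u = fun s : ℝ =>
      C - ((n - 2) / (2 * a)) * Real.exp (-2 * a * s / (n - 2))) :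
    ¬ ∃ K : ℝ, ∀ s : ℝ,
      (n - 1) * (u s * deriv (deriv u) s - (deriv u s) ^ 2) +
        a * u s * deriv u s = K := by
  rintro ⟨K, hK⟩
  have hn2 : (n : ℝ) - 2 ≠ 0 := sub_ne_zero.mpr (by norm_cast; lia)
  obtain rfl : u = fun s => C + -((n - 2) / (2 * a)) * exp (-2 * a / (n - 2) * s) := by
    simp only [hu, div_mul_eq_mul_div, neg_mul, ← sub_eq_add_neg]
  have hfinite := stmt_14_general ha (c := -((n - 2) / (2 * a))) (k := -2 * a / (n - 2))
    (by simp [ha, hn2]) (by simp [ha, hn2]) (n - 1) C K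
  exact Set.infinite_univ (hfinite.subset fun s _ => hK s)
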